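/- Let X and Y be metric spaces, F : X ⇉ Y a set-valued mapping, (x̄,ȳ) ∈ gph F, and φ : [0,∞) → [0,∞) continuously differentiable with φ(0)=0 and φ'(t)>0 for all t≥0. Then (i) sr_φ[F](x̄,ȳ) ≤ |∇F|_φ^◇(x̄,ȳ); and (ii) if X and Y are complete and gph F is locally closed near (x̄,ȳ), then sr_φ[F](x̄,ȳ) = |∇F|_φ^◇(x̄,ȳ). -/

import Mathlib

open Filter Metric Set Topology ENNReal

/-- The parametric metric `d_ρ((x,y),(u,v)) = max{d(x,u), ρ·d(y,v)}` on a product. -/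
noncomputable def dRho {X Y : Type*} [MetricSpace X] [MetricSpace Y]
    (ρ : ℝ) (p q : X × Y) : ℝ :=
  max (dist p.1 q.1) (ρ * dist p.2 q.2)

/-- The graph of a set-valued mapping `F : X ⇉ Y`. -/
def svGraph {X Y : Type*} (F : X → Set Y) : Set (X × Y) := {p : X × Y | p.2 ∈ F p.1}

/-- The modulus of metric φ-subregularity
`sr_φ[F](x̄,ȳ) = liminf_{x→x̄, x∉F⁻¹(ȳ)} φ(d(ȳ,F(x)))/d(x,F⁻¹(ȳ))`.
(The value `φ(d(ȳ,F(x)))` is encoded as `inf_{y ∈ F(x)} φ(d(ȳ,y))`, which equals `+∞`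
when `F(x) = ∅`.) -/
noncomputable def srPhi {X Y : Type*} [MetricSpace X] [MetricSpace Y]
    (F : X → Set Y) (φ : ℝ → ℝ) (xbar : X) (ybar : Y) : ℝ≥0∞ :=
  ⨆ (δ : ℝ) (_ : 0 < δ),
    ⨅ (x : X) (_ : dist x xbar < δ ∧ ybar ∉ F x),
      (⨅ (y : Y) (_ : y ∈ F x), ENNReal.ofReal (φ (dist ybar y))) /
        ENNReal.ofReal (Metric.infDist x {u : X | ybar ∈ F u})

/-- The nonlocal (φ,ρ)-slope `|∇F|_{φ,ρ}^◇(x,y)` of `F` at `p = (x,y) ∈ gph F`. -/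
noncomputable def nonlocalPhiSlopeRho {X Y : Type*} [MetricSpace X] [MetricSpace Y]
    (F : X → Set Y) (φ : ℝ → ℝ) (ybar : Y) (ρ : ℝ) (p : X × Y) : ℝ≥0∞ :=
  ⨆ (q : X × Y) (_ : q ∈ svGraph F ∧ q ≠ p),
    ENNReal.ofReal (φ (dist p.2 ybar) - φ (dist q.2 ybar)) / ENNReal.ofReal (dRho ρ q p)

/-- The uniform strict φ-slope `|∇F|_φ^◇(x̄,ȳ)` of `F` at `(x̄,ȳ)`. -/
noncomputable def uniformStrictPhiSlope {X Y : Type*} [MetricSpace X] [MetricSpace Y]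
    (F : X → Set Y) (φ : ℝ → ℝ) (xbar : X) (ybar : Y) : ℝ≥0∞ :=
  ⨆ (ρ : ℝ) (_ : 0 < ρ),
    ⨅ (p : X × Y) (_ : p ∈ svGraph F ∧ ybar ∉ F p.1 ∧
        dist p.1 xbar < ρ ∧ dist p.2 ybar < ρ),
      nonlocalPhiSlopeRho F φ ybar ρ p

/-!
For (i), if `γ < sr_φ[F](x̄,ȳ)` then each graph point `(x,y)` near `(x̄,ȳ)` has a `u ∈ F⁻¹(ȳ)` with
`γ d(x,u) ≤ φ(d(y,ȳ))`, and `(u,ȳ)` witnesses that the nonlocal slope at `(x,y)` is at least `γ`.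
The `ρ d(y,ȳ)` part of `d_ρ` is absorbed for small `ρ` because `φ` grows at least linearly at `0`.

For (ii), if `γ` is below the uniform strict slope then every graph point near `(x̄,ȳ)` outside
`F⁻¹(ȳ) × Y` can be improved at rate `γ`. Ekeland's principle, started at `(x,y)` on the complete
part of the graph, stops at a point that cannot be improved; this point lies over `F⁻¹(ȳ)`, so
`γ d(x, F⁻¹(ȳ)) ≤ φ(d(y,ȳ))`. The principle itself is Zorn's lemma for the order in which `q` is
above `p` when `f q + e q p ≤ f p`: `f` converges along a chain, so the chain is Cauchy and its
limit is an upper bound.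
-/

section Ekeland

variable {α : Type*}

theorem bddAbove_of_isChain_of_dist_le_sub [PseudoMetricSpace α] [CompleteSpace α] [Preorder α]
    [ClosedIciTopology α] {g : α → ℝ} (hg : BddAbove (range g))
    (hdist : ∀ a b, a ≤ b → dist a b ≤ g b - g a) {C : Set α} (hC : IsChain (· ≤ ·) C)
    (hne : C.Nonempty) : BddAbove C := by
  have : Nonempty C := hne.to_subtype
  have : IsDirectedOrder C := hC.directedOn.isDirectedOrder
  have hmono : Monotone fun a : C => g a := fun a b hab =>
    sub_nonneg.1 (dist_nonneg.trans (hdist a b hab))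
  have hbdd : BddAbove (range fun a : C => g a) := hg.mono (range_comp_subset_range _ g)
  have hcauchy_g : Cauchy (map (fun a : C => g a) atTop) :=
    (tendsto_atTop_ciSup hmono hbdd).cauchy_map
  have hdist_le (a b : C) : dist (a : α) b ≤ dist (g a) (g b) := by
    rcases hC.total a.2 b.2 with hab | hba
    · exact (hdist a b hab).trans ((le_abs_self _).trans_eq (abs_sub_comm _ _))
    · rw [dist_comm]
      exact (hdist b a hba).trans (le_abs_self _)
  have hcauchy : Cauchy (map ((↑) : C → α) atTop) := by
    rw [cauchy_map_iff', tendsto_uniformity_iff_dist_tendsto_zero] at hcauchy_g ⊢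
    exact squeeze_zero (fun _ => dist_nonneg) (fun ab => hdist_le ab.1 ab.2) hcauchy_g
  obtain ⟨m, hm⟩ := cauchy_map_iff_exists_tendsto.1 hcauchy
  exact ⟨m, fun a ha => ge_of_tendsto hm (eventually_ge_atTop (⟨a, ha⟩ : C))⟩

theorem exists_ge_isMax_of_dist_le_sub [PseudoMetricSpace α] [CompleteSpace α] [Preorder α]
    [ClosedIciTopology α] {g : α → ℝ} (hg : BddAbove (range g))
    (hdist : ∀ a b, a ≤ b → dist a b ≤ g b - g a) (a : α) : ∃ m, a ≤ m ∧ IsMax m :=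
  zorn_le_nonempty_Ici₀ a
    (fun _ _ hC b hb => bddAbove_of_isChain_of_dist_le_sub hg hdist hC ⟨b, hb⟩) a le_rfl

theorem ekeland_variational_principle [MetricSpace α] [CompleteSpace α] {f : α → ℝ}
    (hf : LowerSemicontinuous f) (hbdd : BddBelow (range f)) {e : α → α → ℝ}
    (he_self : ∀ p, e p p = 0) (he_triangle : ∀ p q r, e p r ≤ e p q + e q r)
    (he_lsc : ∀ p, LowerSemicontinuous fun q => e q p) {c : ℝ} (hc : 0 < c)
    (he_dist : ∀ p q, c * dist p q ≤ e p q) (p₀ : α) :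
    ∃ p, f p + e p p₀ ≤ f p₀ ∧ ∀ q, f q + e q p ≤ f p → q = p := by
  let _ : Preorder α :=
    { le := fun p q => f q + e q p ≤ f p
      le_refl := fun p => by simp only [he_self, add_zero, le_refl]
      le_trans := fun p q r hpq hqr => by linarith [he_triangle r q p] }
  have : ClosedIciTopology α := ⟨fun p => (hf.add (he_lsc p)).isClosed_preimage (f p)⟩
  have hdist (p q : α) (hpq : p ≤ q) : dist p q ≤ -f q / c - -f p / c := by
    rw [← sub_div, le_div_iff₀ hc, dist_comm, mul_comm]
    linarith [he_dist q p, show f q + e q p ≤ f p from hpq]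
  have hbdd_neg : BddAbove (range fun p => -f p / c) := by
    obtain ⟨b, hb⟩ := hbdd
    refine ⟨-b / c, forall_mem_range.2 fun p => ?_⟩
    gcongr
    exact hb (mem_range_self p)
  obtain ⟨p, hp₀, hmax⟩ := exists_ge_isMax_of_dist_le_sub hbdd_neg hdist p₀
  refine ⟨p, hp₀, fun q hq => dist_le_zero.1 ?_⟩
  have hqp : dist q p ≤ -f p / c - -f q / c := hdist q p (hmax hq)
  have hpq : dist p q ≤ -f q / c - -f p / c := hdist p q hq
  linarith [dist_comm p q]

end Ekeland

section GrowthFunction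

variable {φ φ' : ℝ → ℝ}

theorem continuousOn_Ici_of_hasDerivAt (hφc0 : ContinuousWithinAt φ (Ici 0) 0)
    (hderiv : ∀ t, 0 < t → HasDerivAt φ (φ' t) t) : ContinuousOn φ (Ici 0) := by
  intro t ht
  rcases eq_or_lt_of_le (mem_Ici.1 ht) with rfl | ht_pos
  · exact hφc0
  · exact (hderiv t ht_pos).continuousAt.continuousWithinAt

theorem monotoneOn_Ici_of_hasDerivAt_nonneg (hφc0 : ContinuousWithinAt φ (Ici 0) 0)
    (hderiv : ∀ t, 0 < t → HasDerivAt φ (φ' t) t) (hφ'nonneg : ∀ t, 0 < t → 0 ≤ φ' t) :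
    MonotoneOn φ (Ici 0) := by
  refine monotoneOn_of_hasDerivWithinAt_nonneg (convex_Ici 0)
    (continuousOn_Ici_of_hasDerivAt hφc0 hderiv) (f' := φ') ?_ ?_ <;> rw [interior_Ici]
  · exact fun t ht => (hderiv t ht).hasDerivWithinAt
  · exact hφ'nonneg

theorem exists_eventually_mul_le_of_tendsto_deriv {D : EReal} (hφ0 : φ 0 = 0)
    (hφc0 : ContinuousWithinAt φ (Ici 0) 0) (hderiv : ∀ t, 0 < t → HasDerivAt φ (φ' t) t)
    (hD : Tendsto (fun t => (φ' t : EReal)) (𝓝[>] 0) (𝓝 D)) (hDpos : 0 < D) :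
    ∃ c > 0, ∀ᶠ t in 𝓝[>] 0, c * t ≤ φ t := by
  obtain ⟨c, hc_pos, hcD⟩ := EReal.lt_iff_exists_real_btwn.1 hDpos
  obtain ⟨r, hr, hlt_deriv⟩ := mem_nhdsGT_iff_exists_Ioo_subset.1 (hD.eventually_const_lt hcD)
  refine ⟨c, EReal.coe_pos.1 hc_pos, mem_of_superset (Ioo_mem_nhdsGT hr) fun t ht => ?_⟩
  have hmean := (convex_Icc 0 t).mul_sub_le_image_sub_of_le_deriv (f := φ) (C := c)
    ((continuousOn_Ici_of_hasDerivAt hφc0 hderiv).mono Icc_subset_Ici_self)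
    (fun s hs => by
      rw [interior_Icc] at hs
      exact (hderiv s hs.1).differentiableAt.differentiableWithinAt)
    (fun s hs => by
      rw [interior_Icc] at hs
      rw [(hderiv s hs.1).deriv]
      exact (EReal.coe_lt_coe_iff.1 (hlt_deriv ⟨hs.1, hs.2.trans ht.2⟩)).le)
    0 (left_mem_Icc.2 ht.1.le) t (right_mem_Icc.2 ht.1.le) ht.1.le
  rwa [hφ0, sub_zero, sub_zero] at hmean

theorem nonneg_of_monotoneOn_Ici (hφ0 : φ 0 = 0) (hmono : MonotoneOn φ (Ici 0)) {t : ℝ}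
    (ht : 0 ≤ t) : 0 ≤ φ t :=
  hφ0.ge.trans (hmono self_mem_Ici ht ht)

theorem pos_of_monotoneOn_of_eventually_mul_le {c : ℝ} (hmono : MonotoneOn φ (Ici 0))
    (hc : 0 < c) (hgrowth : ∀ᶠ t in 𝓝[>] 0, c * t ≤ φ t) {t : ℝ} (ht : 0 < t) : 0 < φ t := by
  obtain ⟨s, hs_growth, hs_pos, hst⟩ := (hgrowth.and (Ioo_mem_nhdsGT ht)).exists
  calc
    0 < c * s := mul_pos hc hs_pos
    _ ≤ φ s := hs_growth
    _ ≤ φ t := hmono hs_pos.le ht.le hst.le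

end GrowthFunction

theorem mul_lt_of_ofReal_lt_ofReal_div {γ a b : ℝ} (hγ : 0 ≤ γ) (hb : 0 ≤ b)
    (h : ENNReal.ofReal γ < ENNReal.ofReal a / ENNReal.ofReal b) : γ * b < a := by
  have hmul := ENNReal.mul_lt_of_lt_div h
  rwa [← ENNReal.ofReal_mul hγ, ENNReal.ofReal_lt_ofReal_iff_of_nonneg (mul_nonneg hγ hb)] at hmul

theorem le_of_forall_pos_ofReal_lt {a b : ℝ≥0∞}
    (h : ∀ γ : ℝ, 0 < γ → ENNReal.ofReal γ < a → ENNReal.ofReal γ ≤ b) : a ≤ b := by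
  refine ENNReal.le_of_forall_pos_nnreal_lt fun γ hγ hlt => ?_
  rw [← ENNReal.ofReal_coe_nnreal] at hlt ⊢
  exact h γ hγ hlt

section ParametricDistance

variable {X Y : Type*} [MetricSpace X] [MetricSpace Y] {γ ρ : ℝ}

theorem dRho_self (p : X × Y) : dRho ρ p p = 0 := by
  simp only [dRho, dist_self, mul_zero, max_self]

theorem dist_fst_le_dRho (p q : X × Y) : dist p.1 q.1 ≤ dRho ρ p q :=
  le_max_left _ _

theorem dRho_nonneg (p q : X × Y) : 0 ≤ dRho ρ p q :=
  dist_nonneg.trans (dist_fst_le_dRho p q)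

theorem dRho_triangle (hρ : 0 ≤ ρ) (p q r : X × Y) : dRho ρ p r ≤ dRho ρ p q + dRho ρ q r := by
  refine max_le ?_ ?_
  · exact (dist_triangle _ q.1 _).trans (add_le_add (le_max_left _ _) (le_max_left _ _))
  · calc
      ρ * dist p.2 r.2 ≤ ρ * dist p.2 q.2 + ρ * dist q.2 r.2 := by
        rw [← mul_add]
        gcongr
        exact dist_triangle _ _ _
      _ ≤ dRho ρ p q + dRho ρ q r := add_le_add (le_max_right _ _) (le_max_right _ _)

theorem min_one_mul_dist_le_dRho (hρ : 0 ≤ ρ) (p q : X × Y) :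
    min 1 ρ * dist p q ≤ dRho ρ p q := by
  rw [Prod.dist_eq, mul_max_of_nonneg _ _ (le_min zero_le_one hρ)]
  refine max_le_max ?_ ?_
  · exact mul_le_of_le_one_left dist_nonneg (min_le_left _ _)
  · exact mul_le_mul_of_nonneg_right (min_le_right _ _) dist_nonneg

theorem dRho_pos (hρ : 0 < ρ) {p q : X × Y} (hpq : p ≠ q) : 0 < dRho ρ p q :=
  (mul_pos (lt_min one_pos hρ) (dist_pos.2 hpq)).trans_le (min_one_mul_dist_le_dRho hρ.le p q)

theorem continuous_dRho_left (p : X × Y) : Continuous fun q => dRho ρ q p := by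
  unfold dRho
  fun_prop

theorem exists_mem_mul_dRho_le {A : Set X} (hA : A.Nonempty) (hγ : 0 < γ) {x : X} {y v : Y}
    {b : ℝ} (hfst : γ * infDist x A < b) (hsnd : γ * (ρ * dist v y) ≤ b) :
    ∃ u ∈ A, γ * dRho ρ (u, v) (x, y) ≤ b := by
  rw [← lt_div_iff₀' hγ, infDist_lt_iff hA] at hfst
  obtain ⟨u, huA, hxu⟩ := hfst
  refine ⟨u, huA, ?_⟩
  rw [dRho, mul_max_of_nonneg _ _ hγ.le, dist_comm u x]
  exact max_le ((lt_div_iff₀' hγ).1 hxu).le hsnd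

theorem mul_infDist_fst_le_of_forall_exists_descent {S : Set (X × Y)} (hS : IsComplete S)
    {f : X × Y → ℝ} (hf : LowerSemicontinuousOn f S) (hf_nonneg : ∀ p ∈ S, 0 ≤ f p)
    (hγ : 0 < γ) (hρ : 0 < ρ) {A : Set X} {p₀ : X × Y} (hp₀ : p₀ ∈ S)
    (hdescent : ∀ p ∈ S, p.1 ∉ A → f p + γ * dRho ρ p p₀ ≤ f p₀ →
      ∃ q ∈ S, q ≠ p ∧ f q + γ * dRho ρ q p ≤ f p) :
    γ * infDist p₀.1 A ≤ f p₀ := by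
  have : CompleteSpace S := hS.completeSpace_coe
  obtain ⟨⟨p, hpS⟩, hp_le, hp_min⟩ := ekeland_variational_principle
    (f := fun p : S => f p) (lowerSemicontinuous_restrict_iff.2 hf)
    ⟨0, forall_mem_range.2 fun p => hf_nonneg p p.2⟩
    (e := fun p q => γ * dRho ρ p.1 q.1) (fun p => by rw [dRho_self, mul_zero])
    (fun p q r => by
      rw [← mul_add]
      exact mul_le_mul_of_nonneg_left (dRho_triangle hρ.le _ _ _) hγ.le)
    (fun p => (((continuous_dRho_left p.1).comp continuous_subtype_val).const_mul
      γ).lowerSemicontinuous)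
    (mul_pos hγ (lt_min one_pos hρ))
    (fun p q => by
      rw [mul_assoc]
      exact mul_le_mul_of_nonneg_left (min_one_mul_dist_le_dRho hρ.le _ _) hγ.le)
    ⟨p₀, hp₀⟩
  have hpA : p.1 ∈ A := by
    by_contra hpA
    obtain ⟨q, hqS, hqp, hq_le⟩ := hdescent p hpS hpA hp_le
    exact hqp (congrArg Subtype.val (hp_min ⟨q, hqS⟩ hq_le))
  calc
    γ * infDist p₀.1 A ≤ γ * dRho ρ p p₀ := by
      gcongr
      refine (infDist_le_dist_of_mem hpA).trans ?_
      rw [dist_comm]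
      exact dist_fst_le_dRho p p₀
    _ ≤ f p₀ := (le_add_of_nonneg_left (hf_nonneg p hpS)).trans hp_le

end ParametricDistance

/-- The inverse image `F⁻¹(y)` of a point under a set-valued mapping. It is an abbreviation, so
that it is identified with the set written out in `srPhi`. -/
abbrev svInverse {X Y : Type*} (F : X → Set Y) (y : Y) : Set X := {x | y ∈ F x}

section Slope

variable {X Y : Type*} [MetricSpace X] [MetricSpace Y]

/-- Uniform nonlocal descent at rate `γ`: every point of `gph F` that is `ρ`-close to `(x̄,ȳ)` and
does not lie over `F⁻¹(ȳ)` admits another point of `gph F` at which `φ(d(·,ȳ))` is smaller by at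
least `γ` times their `d_ρ`-distance. It expresses, without suprema or quotients, that the uniform
strict φ-slope is at least `γ` at scale `ρ`. -/
def HasUniformDescent (F : X → Set Y) (φ : ℝ → ℝ) (xbar : X) (ybar : Y) (γ ρ : ℝ) : Prop :=
  ∀ p ∈ svGraph F, ybar ∉ F p.1 → dist p.1 xbar < ρ → dist p.2 ybar < ρ →
    ∃ q ∈ svGraph F, q ≠ p ∧ φ (dist q.2 ybar) + γ * dRho ρ q p ≤ φ (dist p.2 ybar)

variable {F : X → Set Y} {xbar : X} {ybar : Y} {φ : ℝ → ℝ} {γ ρ : ℝ}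

theorem HasUniformDescent.le_uniformStrictPhiSlope (h : HasUniformDescent F φ xbar ybar γ ρ)
    (hρ : 0 < ρ) : ENNReal.ofReal γ ≤ uniformStrictPhiSlope F φ xbar ybar := by
  refine le_iSup₂_of_le ρ hρ (le_iInf₂ fun p ⟨hpF, hp_inv, hpx, hpy⟩ => ?_)
  obtain ⟨q, hqF, hqp, hq_le⟩ := h p hpF hp_inv hpx hpy
  refine le_iSup₂_of_le q ⟨hqF, hqp⟩ ?_
  rw [← ENNReal.ofReal_div_of_pos (dRho_pos hρ hqp)]
  refine ENNReal.ofReal_le_ofReal ?_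
  rw [le_div_iff₀ (dRho_pos hρ hqp)]
  linarith

theorem exists_hasUniformDescent_of_lt_uniformStrictPhiSlope (hγ : 0 ≤ γ)
    (h : ENNReal.ofReal γ < uniformStrictPhiSlope F φ xbar ybar) :
    ∃ ρ > 0, HasUniformDescent F φ xbar ybar γ ρ := by
  simp only [uniformStrictPhiSlope, lt_iSup_iff] at h
  obtain ⟨ρ, hρ, h⟩ := h
  refine ⟨ρ, hρ, fun p hpF hp_inv hpx hpy => ?_⟩
  have hslope : ENNReal.ofReal γ < nonlocalPhiSlopeRho F φ ybar ρ p :=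
    h.trans_le (iInf₂_le p ⟨hpF, hp_inv, hpx, hpy⟩)
  simp only [nonlocalPhiSlopeRho, lt_iSup_iff] at hslope
  obtain ⟨q, ⟨hqF, hqp⟩, hq⟩ := hslope
  refine ⟨q, hqF, hqp, ?_⟩
  linarith [mul_lt_of_ofReal_lt_ofReal_div hγ (dRho_nonneg q p) hq]

theorem eventually_mul_infDist_lt_of_lt_srPhi (hγ : 0 ≤ γ)
    (h : ENNReal.ofReal γ < srPhi F φ xbar ybar) :
    ∀ᶠ x in 𝓝 xbar, ybar ∉ F x → ∀ y ∈ F x,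
      γ * infDist x (svInverse F ybar) < φ (dist y ybar) := by
  simp only [srPhi, lt_iSup_iff] at h
  obtain ⟨δ, hδ, h⟩ := h
  filter_upwards [ball_mem_nhds xbar hδ] with x hx hx_inv y hy
  rw [dist_comm]
  refine mul_lt_of_ofReal_lt_ofReal_div hγ infDist_nonneg
    (h.trans_le ((iInf₂_le x ⟨hx, hx_inv⟩).trans ?_))
  exact ENNReal.div_le_div_right (iInf₂_le y hy) _

-- Where `infDist` vanishes the quotient in `srPhi` may be `0 / 0 = 0`, hence the positivity.
theorem le_srPhi_of_eventually (hγ : 0 ≤ γ)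
    (hpos : ∀ᶠ x in 𝓝 xbar, ybar ∉ F x → 0 < infDist x (svInverse F ybar))
    (hle : ∀ᶠ x in 𝓝 xbar, ∀ y ∈ F x, γ * infDist x (svInverse F ybar) ≤ φ (dist y ybar)) :
    ENNReal.ofReal γ ≤ srPhi F φ xbar ybar := by
  obtain ⟨δ, hδ, h⟩ := Metric.eventually_nhds_iff.1 (hpos.and hle)
  refine le_iSup₂_of_le δ hδ (le_iInf₂ fun x ⟨hx, hx_inv⟩ => ?_)
  obtain ⟨hx_pos, hx_le⟩ := h hx
  rw [ENNReal.le_div_iff_mul_le (.inl (ENNReal.ofReal_pos.2 (hx_pos hx_inv)).ne')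
    (.inl ENNReal.ofReal_ne_top), ← ENNReal.ofReal_mul hγ]
  refine le_iInf₂ fun y hy => ENNReal.ofReal_le_ofReal ?_
  rw [dist_comm]
  exact hx_le y hy

theorem eventually_infDist_svInverse_pos {U : Set (X × Y)} (hne : (svInverse F ybar).Nonempty)
    (hU : U ∈ 𝓝 (xbar, ybar)) (hclosed : IsClosed (svGraph F ∩ U)) :
    ∀ᶠ x in 𝓝 xbar, ybar ∉ F x → 0 < infDist x (svInverse F ybar) := by
  have htendsto (x : X) : Tendsto (fun u => (u, ybar)) (𝓝 x) (𝓝 (x, ybar)) :=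
    tendsto_id.prodMk_nhds tendsto_const_nhds
  filter_upwards [(htendsto xbar).eventually (eventually_mem_nhds_iff.2 hU)] with x hxU hx_inv
  rw [← infDist_pos_iff_notMem_closure hne]
  intro hx_closure
  have hfrequently : ∃ᶠ u in 𝓝 x, (u, ybar) ∈ svGraph F ∩ U :=
    (mem_closure_iff_frequently.1 hx_closure).and_eventually (htendsto x hxU)
  exact hx_inv (hclosed.mem_of_frequently_of_tendsto hfrequently (htendsto x)).1

theorem exists_hasUniformDescent_of_eventually_mul_infDist_lt (hgraph : ybar ∈ F xbar)
    (hφ0 : φ 0 = 0) {c : ℝ} (hc : 0 < c) (hgrowth : ∀ᶠ t in 𝓝[>] 0, c * t ≤ φ t) (hγ : 0 < γ)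
    (h : ∀ᶠ x in 𝓝 xbar, ybar ∉ F x → ∀ y ∈ F x,
      γ * infDist x (svInverse F ybar) < φ (dist y ybar)) :
    ∃ ρ > 0, HasUniformDescent F φ xbar ybar γ ρ := by
  obtain ⟨δ, hδ, hreg⟩ := Metric.eventually_nhds_iff.1 h
  obtain ⟨r, hr, hlin⟩ := mem_nhdsGT_iff_exists_Ioo_subset.1 hgrowth
  obtain ⟨ρ, hρ, hρ_lt⟩ := exists_between (lt_min hδ (lt_min (mem_Ioi.1 hr) (div_pos hc hγ)))
  simp only [lt_min_iff, lt_div_iff₀' hγ] at hρ_lt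
  obtain ⟨hρδ, hρr, hρc⟩ := hρ_lt
  refine ⟨ρ, hρ, fun ⟨x, y⟩ hy hx_inv hx hyρ => ?_⟩
  have hy_ne : y ≠ ybar := fun hy_eq => hx_inv (hy_eq ▸ hy)
  have hsnd : γ * (ρ * dist ybar y) ≤ φ (dist y ybar) := by
    calc
      γ * (ρ * dist ybar y) = γ * ρ * dist y ybar := by rw [dist_comm, mul_assoc]
      _ ≤ c * dist y ybar := by gcongr
      _ ≤ φ (dist y ybar) := hlin ⟨dist_pos.2 hy_ne, hyρ.trans hρr⟩
  obtain ⟨u, hu, hu_le⟩ :=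
    exists_mem_mul_dRho_le ⟨xbar, hgraph⟩ hγ (hreg (hx.trans hρδ) hx_inv y hy) hsnd
  refine ⟨(u, ybar), hu, fun h_eq => hy_ne (congrArg Prod.snd h_eq).symm, ?_⟩
  rwa [dist_self, hφ0, zero_add]

theorem dist_lt_of_add_mul_dRho_le (hmono : MonotoneOn φ (Ici 0)) (hφ0 : φ 0 = 0) (hγ : 0 < γ)
    {δ η : ℝ} (hη : 0 ≤ η) (hδη : γ * δ ≤ φ η) {p q : X × Y} (hp : dist p.1 xbar < δ)
    (hp_small : φ (dist p.2 ybar) < γ * δ)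
    (hqp : φ (dist q.2 ybar) + γ * dRho ρ q p ≤ φ (dist p.2 ybar)) :
    dist q.1 xbar < 2 * δ ∧ dist q.2 ybar < η := by
  have hφ_nonneg : 0 ≤ φ (dist q.2 ybar) := nonneg_of_monotoneOn_Ici hφ0 hmono dist_nonneg
  have hdRho : dRho ρ q p < δ := lt_of_mul_lt_mul_left (by linarith) hγ.le
  constructor
  · linarith [dist_triangle q.1 p.1 xbar, dist_fst_le_dRho (ρ := ρ) q p]
  · refine hmono.reflect_lt dist_nonneg hη ?_
    linarith [mul_nonneg hγ.le (dRho_nonneg (ρ := ρ) q p)]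

theorem HasUniformDescent.mul_infDist_le (h : HasUniformDescent F φ xbar ybar γ ρ)
    (hγ : 0 < γ) (hφ0 : φ 0 = 0) (hmono : MonotoneOn φ (Ici 0))
    (hlsc : LowerSemicontinuousOn φ (Ici 0)) {U : Set (X × Y)}
    (hcomplete : IsComplete (svGraph F ∩ U)) {δ η : ℝ}
    (hball : ball (xbar, ybar) η ⊆ U) (hηρ : η ≤ ρ) (hδη : 2 * δ ≤ η) (hδφ : γ * δ ≤ φ η)
    {p : X × Y} (hpF : p ∈ svGraph F) (hp : dist p.1 xbar < δ)
    (hp_small : φ (dist p.2 ybar) < γ * δ) :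
    γ * infDist p.1 (svInverse F ybar) ≤ φ (dist p.2 ybar) := by
  have hη : 0 < η := by linarith [dist_nonneg.trans_lt hp]
  have hρ : 0 < ρ := hη.trans_le hηρ
  have hlsc_dist : LowerSemicontinuousOn (fun q : X × Y => φ (dist q.2 ybar)) (svGraph F ∩ U) :=
    hlsc.comp (g := fun q : X × Y => dist q.2 ybar) (by fun_prop) fun _ _ => dist_nonneg
  have hnear (q : X × Y) (hq : φ (dist q.2 ybar) + γ * dRho ρ q p ≤ φ (dist p.2 ybar)) :
      dist q.1 xbar < η ∧ dist q.2 ybar < η := by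
    obtain ⟨hqx, hqy⟩ := dist_lt_of_add_mul_dRho_le hmono hφ0 hγ hη.le hδφ hp hp_small hq
    exact ⟨hqx.trans_le hδη, hqy⟩
  have hmemU (q : X × Y) (hq : φ (dist q.2 ybar) + γ * dRho ρ q p ≤ φ (dist p.2 ybar)) : q ∈ U :=
    hball (max_lt (hnear q hq).1 (hnear q hq).2)
  have hpU : p ∈ U := hmemU p (by rw [dRho_self, mul_zero, add_zero])
  refine mul_infDist_fst_le_of_forall_exists_descent hcomplete hlsc_dist
    (fun _ _ => nonneg_of_monotoneOn_Ici hφ0 hmono dist_nonneg) hγ hρ ⟨hpF, hpU⟩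
    fun q hq hq_inv hqp => ?_
  obtain ⟨hqx, hqy⟩ := hnear q hqp
  obtain ⟨z, hzF, hzq, hz_le⟩ := h q hq.1 hq_inv (hqx.trans_le hηρ) (hqy.trans_le hηρ)
  refine ⟨z, ⟨hzF, hmemU z ?_⟩, hzq, hz_le⟩
  linarith [mul_le_mul_of_nonneg_left (dRho_triangle hρ.le z q p) hγ.le]

theorem HasUniformDescent.eventually_mul_infDist_le (h : HasUniformDescent F φ xbar ybar γ ρ)
    (hgraph : ybar ∈ F xbar) (hγ : 0 < γ) (hρ : 0 < ρ) (hφ0 : φ 0 = 0)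
    (hφ_pos : ∀ t, 0 < t → 0 < φ t) (hmono : MonotoneOn φ (Ici 0))
    (hlsc : LowerSemicontinuousOn φ (Ici 0)) {U : Set (X × Y)} (hU : U ∈ 𝓝 (xbar, ybar))
    (hcomplete : IsComplete (svGraph F ∩ U)) :
    ∀ᶠ x in 𝓝 xbar, ∀ y ∈ F x, γ * infDist x (svInverse F ybar) ≤ φ (dist y ybar) := by
  obtain ⟨r, hr, hball⟩ := Metric.mem_nhds_iff.1 hU
  have hη : 0 < min ρ r := lt_min hρ hr
  obtain ⟨δ, hδ, hδ_lt⟩ := exists_between (lt_min (half_pos hη) (div_pos (hφ_pos _ hη) hγ))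
  rw [lt_min_iff, lt_div_iff₀' two_pos, lt_div_iff₀' hγ] at hδ_lt
  filter_upwards [ball_mem_nhds xbar hδ] with x hx y hy
  rcases lt_or_ge (φ (dist y ybar)) (γ * δ) with hsmall | hlarge
  · exact h.mul_infDist_le hγ hφ0 hmono hlsc hcomplete
      ((ball_subset_ball (min_le_right _ _)).trans hball) (min_le_left _ _) hδ_lt.1.le hδ_lt.2.le
      (p := (x, y)) hy hx hsmall
  · refine le_trans ?_ hlarge
    gcongr
    exact (infDist_le_dist_of_mem (s := svInverse F ybar) hgraph).trans (mem_ball.1 hx).le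

theorem srPhi_le_uniformStrictPhiSlope_of_eventually_mul_le (hgraph : ybar ∈ F xbar)
    (hφ0 : φ 0 = 0) {c : ℝ} (hc : 0 < c) (hgrowth : ∀ᶠ t in 𝓝[>] 0, c * t ≤ φ t) :
    srPhi F φ xbar ybar ≤ uniformStrictPhiSlope F φ xbar ybar := by
  refine le_of_forall_pos_ofReal_lt fun γ hγ hlt => ?_
  obtain ⟨ρ, hρ, hdescent⟩ := exists_hasUniformDescent_of_eventually_mul_infDist_lt hgraph hφ0 hc
    hgrowth hγ (eventually_mul_infDist_lt_of_lt_srPhi hγ.le hlt)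
  exact hdescent.le_uniformStrictPhiSlope hρ

theorem uniformStrictPhiSlope_le_srPhi (hgraph : ybar ∈ F xbar) (hφ0 : φ 0 = 0)
    (hφ_pos : ∀ t, 0 < t → 0 < φ t) (hmono : MonotoneOn φ (Ici 0))
    (hlsc : LowerSemicontinuousOn φ (Ici 0)) {U : Set (X × Y)} (hU : U ∈ 𝓝 (xbar, ybar))
    (hcomplete : IsComplete (svGraph F ∩ U)) :
    uniformStrictPhiSlope F φ xbar ybar ≤ srPhi F φ xbar ybar := by
  refine le_of_forall_pos_ofReal_lt fun γ hγ hlt => ?_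
  obtain ⟨ρ, hρ, hdescent⟩ := exists_hasUniformDescent_of_lt_uniformStrictPhiSlope hγ.le hlt
  exact le_srPhi_of_eventually hγ.le
    (eventually_infDist_svInverse_pos ⟨xbar, hgraph⟩ hU hcomplete.isClosed)
    (hdescent.eventually_mul_infDist_le hgraph hγ hρ hφ0 hφ_pos hmono hlsc hU hcomplete)

theorem srPhi_le_uniformStrictPhiSlope_general (hgraph : ybar ∈ F xbar) (hφ0 : φ 0 = 0)
    (hgrowth : ∃ c > 0, ∀ᶠ t in 𝓝[>] 0, c * t ≤ φ t) :
    srPhi F φ xbar ybar ≤ uniformStrictPhiSlope F φ xbar ybar ∧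
    (MonotoneOn φ (Ici 0) → LowerSemicontinuousOn φ (Ici 0) →
      (∃ U ∈ 𝓝 (xbar, ybar), IsComplete (svGraph F ∩ U)) →
      srPhi F φ xbar ybar = uniformStrictPhiSlope F φ xbar ybar) := by
  obtain ⟨c, hc, hgrowth⟩ := hgrowth
  have hle := srPhi_le_uniformStrictPhiSlope_of_eventually_mul_le hgraph hφ0 hc hgrowth
  refine ⟨hle, fun hmono hlsc ⟨U, hU, hcomplete⟩ => hle.antisymm ?_⟩
  exact uniformStrictPhiSlope_le_srPhi hgraph hφ0
    (fun _ => pos_of_monotoneOn_of_eventually_mul_le hmono hc hgrowth) hmono hlsc hU hcomplete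

end Slope

/-- Theorem 6T1: (i) `sr_φ[F](x̄,ȳ) ≤ |∇F|_φ^◇(x̄,ȳ)`; (ii) if `X` and `Y` are complete
and `gph F` is locally closed near `(x̄,ȳ)`, then equality holds. -/
theorem srPhi_le_uniformStrictPhiSlope {X Y : Type*} [MetricSpace X] [MetricSpace Y]
    (F : X → Set Y) (xbar : X) (ybar : Y)
    (hgraph : ybar ∈ F xbar)
    (φ φ' : ℝ → ℝ) (D : EReal)
    (hφ0 : φ 0 = 0)
    (hφnonneg : ∀ t : ℝ, 0 ≤ t → 0 ≤ φ t)
    (hφc0 : ContinuousWithinAt φ (Set.Ici 0) 0)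
    (hderiv : ∀ t : ℝ, 0 < t → HasDerivAt φ (φ' t) t)
    (hφ'pos : ∀ t : ℝ, 0 < t → 0 < φ' t)
    (hφ'cont : ContinuousOn φ' (Set.Ioi 0))
    (hD : Filter.Tendsto (fun t : ℝ => ((φ' t : ℝ) : EReal)) (𝓝[>] (0:ℝ)) (𝓝 D))
    (hDpos : 0 < D) :
    srPhi F φ xbar ybar ≤ uniformStrictPhiSlope F φ xbar ybar ∧
    (CompleteSpace X → CompleteSpace Y →
      (∃ U ∈ 𝓝 ((xbar, ybar) : X × Y), IsClosed U ∧ IsClosed (svGraph F ∩ U)) →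
      srPhi F φ xbar ybar = uniformStrictPhiSlope F φ xbar ybar) :=
  (srPhi_le_uniformStrictPhiSlope_general hgraph hφ0
    (exists_eventually_mul_le_of_tendsto_deriv hφ0 hφc0 hderiv hD hDpos)).imp_right
    fun heq _ _ ⟨U, hU, _, hclosed⟩ => heq
      (monotoneOn_Ici_of_hasDerivAt_nonneg hφc0 hderiv fun t ht => (hφ'pos t ht).le)
      (continuousOn_Ici_of_hasDerivAt hφc0 hderiv).lowerSemicontinuousOn
      ⟨U, hU, hclosed.isComplete⟩
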